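/- For all natural numbers n, k with n ≤ k, the following identity of formal power series over ℤ holds: (1 + X)^n = (1 - X)^{k+1} · Σ_{m≥0} C(m + (k - n), n, k) · X^m. Equivalently, (1+x)^n/(1-x)^{k+1} = Σ_{m≥0} C(m+k-n, n, k) x^m. -/

import Mathlib

open Finset

/-- The set of ternary words of length `m + n` (as functions `Fin (m+n) → Fin 3`)
having exactly `k` letters equal to `2` and no letter equal to `0` among the
first `m` letters. -/
def ternaryWords (m n k : ℕ) : Finset (Fin (m + n) → Fin 3) :=
  univ.filter fun w =>
    (univ.filter fun i => w i = 2).card = k ∧ ∀ i : Fin (m + n), (i : ℕ) < m → w i ≠ 0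

/-- `C m n k` is the number of ternary words of length `m + n` with exactly `k`
twos and no zero among the first `m` letters; it equals the inset number
`{m,n choose k}` of Janjić–Petković. -/
def C (m n k : ℕ) : ℕ := (ternaryWords m n k).card

/-!
For fixed `m` and `n`, the polynomial `(1 + X)^m (2 + X)^n` counts the words by their number of
twos. Writing `2 + X = (1 + X) + 1` gives a recurrence trading an unrestricted letter for a nonzero
one, so each increment of `n` multiplies the generating function in `m` by `1 + X`: no boundary term
appears because a word of length less than `k` cannot contain `k` twos. For `n = 0` the coefficients
are binomial, and the generating function is `1 / (1 - X)^(k + 1)`.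
-/

section GeneratingPolynomial

open scoped Polynomial
open Polynomial (X)

theorem card_filter_piFinset_eq_coeff_prod {ι α : Type*} [Fintype ι] [DecidableEq ι]
    [DecidableEq α] (t : ι → Finset α) (a : α) (k : ℕ) :
    #{w ∈ Fintype.piFinset t | #{i | w i = a} = k} =
      (∏ i, ∑ j ∈ t i, if j = a then (X : ℕ[X]) else 1).coeff k := by
  have coeff_weight (w : ι → α) :
      (∏ i, if w i = a then (X : ℕ[X]) else 1).coeff k = if #{i | w i = a} = k then 1 else 0 := by
    rw [← prod_filter, prod_const, Polynomial.coeff_X_pow]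
    simp only [eq_comm]
  rw [prod_univ_sum, Polynomial.finsetSum_coeff, card_filter]
  simp only [coeff_weight]

theorem ternaryWords_eq_filter_piFinset (m n k : ℕ) :
    ternaryWords m n k =
      {w ∈ Fintype.piFinset fun i : Fin (m + n) =>
        if (i : ℕ) < m then ({1, 2} : Finset (Fin 3)) else univ | #{i | w i = 2} = k} := by
  have ne_zero_iff : ∀ j : Fin 3, j ≠ 0 ↔ j ∈ ({1, 2} : Finset (Fin 3)) := by decide
  ext w
  simp only [ternaryWords, mem_filter, mem_univ, true_and, Fintype.mem_piFinset, ne_zero_iff]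
  rw [and_comm]
  refine and_congr_left' (forall_congr' fun i => ?_)
  split_ifs with hi <;> simp [hi]

theorem C_eq_coeff (m n k : ℕ) : C m n k = ((1 + X) ^ m * (2 + X) ^ n : ℕ[X]).coeff k := by
  have sum_nonzero_letters :
      ∑ j ∈ ({1, 2} : Finset (Fin 3)), (if j = 2 then (X : ℕ[X]) else 1) = 1 + X := by
    rw [sum_pair (by decide)]
    simp
  have sum_letters : ∑ j : Fin 3, (if j = 2 then (X : ℕ[X]) else 1) = 2 + X := by
    simp [Fin.sum_univ_three, one_add_one_eq_two]
  rw [C, ternaryWords_eq_filter_piFinset, card_filter_piFinset_eq_coeff_prod, Fin.prod_univ_add]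
  simp [sum_nonzero_letters, sum_letters]

theorem C_zero_eq_choose (m k : ℕ) : C m 0 k = m.choose k := by
  rw [C_eq_coeff, pow_zero, mul_one, Polynomial.coeff_one_add_X_pow, Nat.cast_id]

theorem C_succ (m n k : ℕ) : C m (n + 1) k = C (m + 1) n k + C m n k := by
  simp only [C_eq_coeff, ← Polynomial.coeff_add]
  congr 1
  ring

end GeneratingPolynomial

theorem C_eq_zero_of_lt {m n k : ℕ} (h : m + n < k) : C m n k = 0 := by
  rw [C, card_eq_zero, ternaryWords, filter_eq_empty_iff]
  rintro w - ⟨card_twos, -⟩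
  have card_twos_le : #{i | w i = 2} ≤ m + n := by
    simpa only [Fintype.card_fin] using card_le_univ {i | w i = 2}
  omega

section GeneratingSeries

open PowerSeries (X)

theorem mk_C_succ (R : Type*) [Semiring R] {d n k : ℕ} (h : d + n < k) :
    PowerSeries.mk (fun m => (C (m + d) (n + 1) k : R)) =
      (1 + X) * PowerSeries.mk fun m => (C (m + (d + 1)) n k : R) := by
  have shift : PowerSeries.mk (fun m => (C (m + d) n k : R)) =
      X * PowerSeries.mk fun m => (C (m + (d + 1)) n k : R) := by
    rw [PowerSeries.eq_X_mul_shift_add_const (PowerSeries.mk fun m => (C (m + d) n k : R))]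
    simp [C_eq_zero_of_lt h, add_right_comm, add_assoc]
  rw [add_mul, one_mul, ← shift]
  ext m
  simp [C_succ, add_assoc]

theorem mk_C_eq_one_add_X_pow_mul (R : Type*) [Semiring R] {n k : ℕ} (h : n ≤ k) :
    PowerSeries.mk (fun m => (C (m + (k - n)) n k : R)) =
      (1 + X) ^ n * PowerSeries.mk fun m => ((k + m).choose k : R) := by
  induction n with
  | zero => simp only [C_zero_eq_choose, Nat.sub_zero, pow_zero, one_mul, add_comm]
  | succ n ih =>
    have boundary : k - (n + 1) + n < k := by omega
    have start_succ : k - (n + 1) + 1 = k - n := by omega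
    rw [mk_C_succ R boundary, start_succ, ih (by omega), pow_succ', mul_assoc]

theorem stmt_15_general (R : Type*) [CommRing R] {n k : ℕ} (h : n ≤ k) :
    (1 + X : PowerSeries R) ^ n =
      (1 - X) ^ (k + 1) * PowerSeries.mk fun m => (C (m + (k - n)) n k : R) := by
  rw [mk_C_eq_one_add_X_pow_mul R h, mul_left_comm, mul_comm ((1 - X) ^ (k + 1)),
    PowerSeries.mk_add_choose_mul_one_sub_pow_eq_one, mul_one]

end GeneratingSeries

theorem stmt_15 (n k : ℕ) (h : n ≤ k) :
    (1 + PowerSeries.X : PowerSeries ℤ) ^ n =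
      (1 - PowerSeries.X) ^ (k + 1) *
        PowerSeries.mk (fun m => (C (m + (k - n)) n k : ℤ)) :=
  stmt_15_general ℤ h
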